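/- Suppose the linear homogeneous system x(t+1) = A(t)x(t) admits an exponential dichotomy with projection P and constants α₁, α₂, β₁, β₂. Suppose A is discrete almost automorphic: for any sequence of integers there is a subsequence (θ_k) such that A(t+θ_k) → Ā(t) and Ā(t−θ_k) → A(t) as k → ∞ for each t ∈ ℤ; assume each Ā(t) is invertible, and let X̄ be the principal fundamental matrix solution of the limiting system x(t+1) = Ā(t)x(t) with X̄(t₀) = I. Then there exists a projection P̄ (P̄² = P̄) such that: (i) X(t+θ_k) P X(s+θ_k)⁻¹ → X̄(t) P̄ X̄(s)⁻¹ as k → ∞ for each t ∈ ℤ and each integer s ≤ t; (ii) X(t+θ_k)(I−P)X(s+θ_k)⁻¹ → X̄(t)(I−P̄)X̄(s)⁻¹ as k → ∞ for each t ∈ ℤ and each integer s ≥ t; (iii) the limiting system admits an exponential dichotomy with projection P̄ and the same constants α₁, α₂, β₁, β₂; and (iv) X̄(t−θ_k) P̄ X̄(s−θ_k)⁻¹ → X(t) P X(s)⁻¹ for s ≤ t and X̄(t−θ_k)(I−P̄)X̄(s−θ_k)⁻¹ → X(t)(I−P)X(s)⁻¹ for s ≥ t, as k → ∞, for each t ∈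 ℤ. -/

import Mathlib

open Filter Topology

/-!
The projections `Π(t) = X(t) P X(t)⁻¹` of a dichotomy depend on the propagators `X(r) X(t)⁻¹` alone,
and continuously so. Given two systems `X`, `Y` with the same rates, split
`Π_X(t) - Π_Y(t) = Π_X(t) (1 - Π_Y(t)) - (1 - Π_X(t)) Π_Y(t)` and insert a time `r ≪ t` into the
first product, `r ≫ t` into the second. Both then become small, up to an error
proportional to the distance between the propagators of `X` and `Y` from `t` to `r`. Applied to two
translates of one system this makes the translated projections Cauchy, and their limit is the
projection of the limiting system. Applied to a single system it makes the projection unique, so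
that translating the limiting system back recovers `P`.
-/

section Propagator

variable {T R : Type*} [Ring R]

/-- The operator `X(t) P X(s)⁻¹` from time `s` to time `t` of the system with fundamental solution
`X`, restricted to the part selected by `P`. For `P = 1` it is the full transition operator. -/
def propagator (X : T → Rˣ) (P : R) (t s : T) : R := X t * P * ↑(X s)⁻¹

variable (X Y : T → Rˣ) (P Q : R) (t r s : T)

theorem propagator_one : propagator X 1 t s = ↑(X t / X s) := by
  simp [propagator, div_eq_mul_inv]

theorem propagator_one_self : propagator X 1 t t = 1 := by
  simp [propagator]

theorem propagator_mul_propagator :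
    propagator X P t r * propagator X Q r s = propagator X (P * Q) t s := by
  simp [propagator, mul_assoc]

theorem propagator_one_sub :
    propagator X (1 - P) t s = propagator X 1 t s - propagator X P t s := by
  simp only [propagator, mul_sub, sub_mul]

theorem propagator_inj {X : T → Rˣ} {P Q : R} {t s : T} :
    propagator X P t s = propagator X Q t s ↔ P = Q := by
  simp [propagator]

theorem propagator_sub_propagator_self :
    propagator X P t t - propagator Y Q t t =
      propagator X P t t * propagator Y (1 - Q) t t -
        propagator X (1 - P) t t * propagator Y Q t t := by
  simp only [propagator_one_sub, propagator_one_self]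
  noncomm_ring

theorem propagator_self_mul_propagator_self :
    propagator X P t t * propagator Y Q t t =
      propagator X P t r * propagator Y Q r t +
        propagator X P t r * (propagator X 1 r t - propagator Y 1 r t) * propagator Y Q t t := by
  rw [mul_sub, sub_mul, propagator_mul_propagator, mul_assoc _ (propagator Y 1 r t),
    propagator_mul_propagator, mul_one, one_mul, add_sub_cancel]

end Propagator

section Limits

variable {ι T R : Type*} [Ring R] [TopologicalSpace R] {l : Filter ι}

theorem tendsto_propagator_one_sub [ContinuousSub R] {X : ι → T → Rˣ} {Y : T → Rˣ} {P : ι → R}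
    {Q : R} {t s : ι → T} {t' s' : T}
    (hXY : Tendsto (fun i => propagator (X i) 1 (t i) (s i)) l (𝓝 (propagator Y 1 t' s')))
    (hPQ : Tendsto (fun i => propagator (X i) (P i) (t i) (s i)) l (𝓝 (propagator Y Q t' s'))) :
    Tendsto (fun i => propagator (X i) (1 - P i) (t i) (s i)) l
      (𝓝 (propagator Y (1 - Q) t' s')) := by
  simpa only [propagator_one_sub] using hXY.sub hPQ

theorem exists_tendsto_propagator [ContinuousMul R] {X Y : T → Rˣ} {P L : R} {τ : ι → T → T}
    {t₀ : T}
    (hXY : ∀ t s, Tendsto (fun i => propagator X 1 (τ i t) (τ i s)) l (𝓝 (propagator Y 1 t s)))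
    (hL : Tendsto (fun i => propagator X P (τ i t₀) (τ i t₀)) l (𝓝 L)) :
    ∃ Q, ∀ t s, Tendsto (fun i => propagator X P (τ i t) (τ i s)) l (𝓝 (propagator Y Q t s)) := by
  refine ⟨↑(Y t₀)⁻¹ * L * Y t₀, fun t s => ?_⟩
  have hlim := ((hXY t t₀).mul hL).mul (hXY t₀ s)
  simp only [propagator_mul_propagator, one_mul, mul_one] at hlim
  simpa only [propagator, mul_one, mul_assoc] using hlim

end Limits

theorem tendsto_propagator_self_mul_propagator_self_zero {ι T R : Type*} [NormedRing R]
    {l : Filter ι} {X Y : ι → T → Rˣ} {P Q : ι → R} {t : T} {m : Filter T} [m.NeBot]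
    {f g : T → ℝ} {c : ℝ}
    (hX : ∀ᶠ r in m, ∀ i, ‖propagator (X i) (P i) t r‖ ≤ f r)
    (hY : ∀ᶠ r in m, ∀ i, ‖propagator (Y i) (Q i) r t‖ ≤ g r)
    (hfg : Tendsto (fun r => f r * g r) m (𝓝 0))
    (hc : ∀ i, ‖propagator (Y i) (Q i) t t‖ ≤ c)
    (hXY : ∀ r, Tendsto (fun i => propagator (X i) 1 r t - propagator (Y i) 1 r t) l (𝓝 0)) :
    Tendsto (fun i => propagator (X i) (P i) t t * propagator (Y i) (Q i) t t) l (𝓝 0) := by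
  rw [NormedAddGroup.tendsto_nhds_zero]
  intro ε hε
  obtain ⟨r, hr, hXr, hYr⟩ := ((hfg.eventually_lt_const hε).and (hX.and hY)).exists
  have hbound : Tendsto
      (fun i => f r * g r + f r * ‖propagator (X i) 1 r t - propagator (Y i) 1 r t‖ * c) l
      (𝓝 (f r * g r)) := by
    simpa using (((hXY r).norm.const_mul (f r)).mul_const c).const_add (f r * g r)
  filter_upwards [hbound.eventually_lt_const hr] with i hi
  rw [propagator_self_mul_propagator_self _ _ _ _ t r]
  refine (norm_add_le_of_le (norm_mul_le_of_le (hXr i) (hYr i)) ?_).trans_lt hi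
  exact norm_mul_le_of_le (norm_mul_le_of_le (hXr i) le_rfl) (hc i)

section Dichotomy

variable {ι T R : Type*} [AddCommGroup T] [LinearOrder T] [NormedRing R]

/-- A dichotomy of the system with fundamental solution `X`, with projection `P` and rates
`κ₁`, `κ₂`, which bound the propagators of the two complementary parts of the system in terms of the
time lag, counted as a nonpositive number. The exponential dichotomy with constants
`α₁, α₂, β₁, β₂` has rates `κᵢ m = βᵢ (1 + αᵢ) ^ m`. -/
structure HasDichotomy (X : T → Rˣ) (P : R) (κ₁ κ₂ : T → ℝ) : Prop where
  isIdempotentElem : IsIdempotentElem P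
  norm_propagator_le : ∀ s t, s ≤ t → ‖propagator X P t s‖ ≤ κ₁ (s - t)
  norm_propagator_one_sub_le : ∀ s t, t ≤ s → ‖propagator X (1 - P) t s‖ ≤ κ₂ (t - s)

namespace HasDichotomy

variable [IsOrderedAddMonoid T] {X Y : T → Rˣ} {P Q : R} {κ₁ κ₂ : T → ℝ} {l : Filter ι} {θ : ι → T}

theorem comp_add_right (hX : HasDichotomy X P κ₁ κ₂) (τ : T) :
    HasDichotomy (fun t => X (t + τ)) P κ₁ κ₂ where
  isIdempotentElem := hX.isIdempotentElem
  norm_propagator_le s t hst :=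
    (hX.norm_propagator_le (s + τ) (t + τ) (by gcongr)).trans_eq (by rw [add_sub_add_right_eq_sub])
  norm_propagator_one_sub_le s t hts :=
    (hX.norm_propagator_one_sub_le (s + τ) (t + τ) (by gcongr)).trans_eq
      (by rw [add_sub_add_right_eq_sub])

theorem of_tendsto [l.NeBot] (hX : HasDichotomy X P κ₁ κ₂)
    (hXY : ∀ t s, Tendsto (fun i => propagator X 1 (t + θ i) (s + θ i)) l (𝓝 (propagator Y 1 t s)))
    (hPQ : ∀ t s,
      Tendsto (fun i => propagator X P (t + θ i) (s + θ i)) l (𝓝 (propagator Y Q t s))) :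
    HasDichotomy Y Q κ₁ κ₂ where
  isIdempotentElem := by
    have hlim := (hPQ 0 0).mul (hPQ 0 0)
    simp only [propagator_mul_propagator, hX.isIdempotentElem.eq] at hlim
    exact propagator_inj.1 (tendsto_nhds_unique hlim (hPQ 0 0))
  norm_propagator_le s t hst :=
    le_of_tendsto' (hPQ t s).norm fun i => (hX.comp_add_right (θ i)).norm_propagator_le s t hst
  norm_propagator_one_sub_le s t hts :=
    le_of_tendsto' (tendsto_propagator_one_sub (hXY t s) (hPQ t s)).norm fun i =>
      (hX.comp_add_right (θ i)).norm_propagator_one_sub_le s t hts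

theorem tendsto_propagator_self_sub {X Y : ι → T → Rˣ} {P Q : ι → R} {t : T}
    (hX : ∀ i, HasDichotomy (X i) (P i) κ₁ κ₂) (hY : ∀ i, HasDichotomy (Y i) (Q i) κ₁ κ₂)
    (hκ : Tendsto (fun m => κ₁ m * κ₂ m) atBot (𝓝 0))
    (hXY : ∀ r, Tendsto (fun i => propagator (X i) 1 r t - propagator (Y i) 1 r t) l (𝓝 0)) :
    Tendsto (fun i => propagator (X i) (P i) t t - propagator (Y i) (Q i) t t) l (𝓝 0) := by
  have past : Tendsto
      (fun i => propagator (X i) (P i) t t * propagator (Y i) (1 - Q i) t t) l (𝓝 0) := by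
    refine tendsto_propagator_self_mul_propagator_self_zero (m := atBot)
      (f := fun r => κ₁ (r - t)) (g := fun r => κ₂ (r - t))
      ?_ ?_ ?_ (fun i => (hY i).norm_propagator_one_sub_le t t le_rfl) hXY
    · filter_upwards [eventually_le_atBot t] with r hr i using (hX i).norm_propagator_le r t hr
    · filter_upwards [eventually_le_atBot t] with r hr i
        using (hY i).norm_propagator_one_sub_le t r hr
    · simp only [sub_eq_add_neg]
      exact hκ.comp (tendsto_atBot_add_const_right atBot (-t) tendsto_id)
  have future : Tendsto
      (fun i => propagator (X i) (1 - P i) t t * propagator (Y i) (Q i) t t) l (𝓝 0) := by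
    refine tendsto_propagator_self_mul_propagator_self_zero (m := atTop)
      (f := fun r => κ₂ (t - r)) (g := fun r => κ₁ (t - r))
      ?_ ?_ ?_ (fun i => (hY i).norm_propagator_le t t le_rfl) hXY
    · filter_upwards [eventually_ge_atTop t] with r hr i
        using (hX i).norm_propagator_one_sub_le r t hr
    · filter_upwards [eventually_ge_atTop t] with r hr i using (hY i).norm_propagator_le t r hr
    · simp only [mul_comm (κ₂ _), sub_eq_add_neg]
      exact hκ.comp (tendsto_atBot_add_const_left atTop t tendsto_neg_atTop_atBot)
  simpa only [propagator_sub_propagator_self, sub_zero] using past.sub future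

theorem unique (hP : HasDichotomy X P κ₁ κ₂) (hQ : HasDichotomy X Q κ₁ κ₂)
    (hκ : Tendsto (fun m => κ₁ m * κ₂ m) atBot (𝓝 0)) : P = Q := by
  have hlim := tendsto_propagator_self_sub (l := pure ()) (t := 0) (fun _ => hP) (fun _ => hQ) hκ
    (by simp)
  exact propagator_inj.1 (sub_eq_zero.1 (tendsto_const_nhds_iff.1 hlim))

theorem cauchy_map_propagator_self [l.NeBot] (hX : HasDichotomy X P κ₁ κ₂)
    (hκ : Tendsto (fun m => κ₁ m * κ₂ m) atBot (𝓝 0)) {t : T}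
    (hXY : ∀ r, Tendsto (fun i => propagator X 1 (r + θ i) (t + θ i)) l (𝓝 (propagator Y 1 r t))) :
    Cauchy (l.map fun i => propagator X P (t + θ i) (t + θ i)) := by
  refine (IsUniformAddGroup.cauchy_map_iff_tendsto _ _).2 ⟨inferInstance, ?_⟩
  refine tendsto_propagator_self_sub (X := fun p : ι × ι => fun t => X (t + θ p.1))
    (Y := fun p => fun t => X (t + θ p.2)) (fun p => hX.comp_add_right (θ p.1))
    (fun p => hX.comp_add_right (θ p.2)) hκ fun r => ?_
  rw [← sub_self (propagator Y 1 r t)]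
  exact ((hXY r).comp tendsto_fst).sub ((hXY r).comp tendsto_snd)

theorem exists_limit [CompleteSpace R] [l.NeBot] (hX : HasDichotomy X P κ₁ κ₂)
    (hκ : Tendsto (fun m => κ₁ m * κ₂ m) atBot (𝓝 0))
    (hXY : ∀ t s,
      Tendsto (fun i => propagator X 1 (t + θ i) (s + θ i)) l (𝓝 (propagator Y 1 t s))) :
    ∃ Q, HasDichotomy Y Q κ₁ κ₂ ∧ ∀ t s,
      Tendsto (fun i => propagator X P (t + θ i) (s + θ i)) l (𝓝 (propagator Y Q t s)) := by
  obtain ⟨L, hL⟩ := cauchy_map_iff_exists_tendsto.1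
    (hX.cauchy_map_propagator_self hκ fun r => hXY r 0)
  obtain ⟨Q, hQ⟩ := exists_tendsto_propagator (τ := fun i t => t + θ i) hXY hL
  exact ⟨Q, hX.of_tendsto hXY hQ, hQ⟩

end HasDichotomy

end Dichotomy

theorem tendsto_propagator_one_of_tendsto {ι R : Type*} [NormedRing R] [HasSummableGeomSeries R]
    {l : Filter ι} {A B : ℤ → R} {X Y : ℤ → Rˣ} {θ : ι → ℤ}
    (hX : ∀ t, (X (t + 1) : R) = A t * X t) (hY : ∀ t, (Y (t + 1) : R) = B t * Y t)
    (hAB : ∀ t, Tendsto (fun i => A (t + θ i)) l (𝓝 (B t))) (t s : ℤ) :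
    Tendsto (fun i => propagator X 1 (t + θ i) (s + θ i)) l (𝓝 (propagator Y 1 t s)) := by
  -- Inversion is continuous on `Rˣ`, so convergence there also covers the backward steps `t < s`.
  have hstep (t : ℤ) :
      Tendsto (fun i => X (t + 1 + θ i) / X (t + θ i)) l (𝓝 (Y (t + 1) / Y t)) := by
    rw [Units.isOpenEmbedding_val.tendsto_nhds_iff]
    simpa [Function.comp_def, div_eq_mul_inv, hY, add_right_comm t 1, hX] using hAB t
  suffices h : Tendsto (fun i => X (t + θ i) / X (s + θ i)) l (𝓝 (Y t / Y s)) by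
    simpa only [propagator_one, Function.comp_def] using (Units.continuous_val.tendsto _).comp h
  refine Int.inductionOn' t s ?_ (fun t _ ih => ?_) fun t _ ih => ?_
  · simp [tendsto_const_nhds]
  · simpa using (hstep t).mul ih
  · simpa using (hstep (t - 1)).inv.mul ih

theorem tendsto_mul_zpow_mul_mul_zpow_atBot {a b : ℝ} (hab : 1 < a * b) (β₁ β₂ : ℝ) :
    Tendsto (fun m : ℤ => β₁ * a ^ m * (β₂ * b ^ m)) atBot (𝓝 0) := by
  have hlim : Tendsto (fun m : ℤ => (a * b) ^ m) atBot (𝓝 0) := by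
    simpa [Function.comp_def] using
      (tendsto_rpow_atBot_of_base_gt_one _ hab).comp (tendsto_intCast_atBot_iff.2 tendsto_id)
  simpa [mul_zpow, mul_mul_mul_comm] using hlim.const_mul (β₁ * β₂)

theorem stmt_7_general {ι R : Type*} [NormedRing R] [CompleteSpace R] {l : Filter ι} [l.NeBot]
    {A B : ℤ → R} {X Y : ℤ → Rˣ} {P : R} {κ₁ κ₂ : ℤ → ℝ} {θ : ι → ℤ}
    (hX : ∀ t, (X (t + 1) : R) = A t * X t) (hY : ∀ t, (Y (t + 1) : R) = B t * Y t)
    (hP : HasDichotomy X P κ₁ κ₂) (hκ : Tendsto (fun m => κ₁ m * κ₂ m) atBot (𝓝 0))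
    (hAB : ∀ t, Tendsto (fun i => A (t + θ i)) l (𝓝 (B t)))
    (hBA : ∀ t, Tendsto (fun i => B (t - θ i)) l (𝓝 (A t))) :
    ∃ Q, HasDichotomy Y Q κ₁ κ₂ ∧ ∀ t s,
      Tendsto (fun i => propagator X P (t + θ i) (s + θ i)) l (𝓝 (propagator Y Q t s)) ∧
      Tendsto (fun i => propagator X (1 - P) (t + θ i) (s + θ i)) l
        (𝓝 (propagator Y (1 - Q) t s)) ∧
      Tendsto (fun i => propagator Y Q (t - θ i) (s - θ i)) l (𝓝 (propagator X P t s)) ∧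
      Tendsto (fun i => propagator Y (1 - Q) (t - θ i) (s - θ i)) l
        (𝓝 (propagator X (1 - P) t s)) := by
  have hXY := tendsto_propagator_one_of_tendsto hX hY hAB
  have hYX := tendsto_propagator_one_of_tendsto (θ := fun i => -θ i) hY hX hBA
  obtain ⟨Q, hQ, hPQ⟩ := hP.exists_limit hκ hXY
  obtain ⟨P', hP', hQP⟩ := hQ.exists_limit hκ hYX
  obtain rfl := hP.unique hP' hκ
  exact ⟨Q, hQ, fun t s => ⟨hPQ t s, tendsto_propagator_one_sub (hXY t s) (hPQ t s), hQP t s,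
    tendsto_propagator_one_sub (hYX t s) (hQP t s)⟩⟩

/-- Under an exponential dichotomy with projection `P` and constants
`α₁, α₂, β₁, β₂`, if `(θ_k)` realizes the almost automorphy of `A`
(`A(t+θ_k) → Ā(t)` and `Ā(t−θ_k) → A(t)` for each `t`), each `Ā(t)` is invertible, and
`X̄` is the principal fundamental solution of the limiting system `x(t+1) = Ā(t)x(t)`,
then there is a projection `P̄` such that:
(i) `X(t+θ_k) P X(s+θ_k)⁻¹ → X̄(t) P̄ X̄(s)⁻¹` for `s ≤ t`;
(ii) `X(t+θ_k)(I−P) X(s+θ_k)⁻¹ → X̄(t)(I−P̄) X̄(s)⁻¹` for `t ≤ s`;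
(iii) the limiting system admits an exponential dichotomy with projection `P̄` and the
same constants; and
(iv) `X̄(t−θ_k) P̄ X̄(s−θ_k)⁻¹ → X(t) P X(s)⁻¹` for `s ≤ t` and
`X̄(t−θ_k)(I−P̄) X̄(s−θ_k)⁻¹ → X(t)(I−P) X(s)⁻¹` for `t ≤ s`. -/
theorem stmt_7 {𝕏 : Type*} [NormedAddCommGroup 𝕏] [NormedSpace ℝ 𝕏] [CompleteSpace 𝕏]
    (A X Xinv : ℤ → 𝕏 →L[ℝ] 𝕏) (t₀ : ℤ)
    (hX : ∀ t : ℤ, X (t + 1) = A t * X t) (hX0 : X t₀ = 1)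
    (hXinv : ∀ t : ℤ, X t * Xinv t = 1) (hXinv' : ∀ t : ℤ, Xinv t * X t = 1)
    (P : 𝕏 →L[ℝ] 𝕏) (hP : P * P = P)
    (α₁ α₂ β₁ β₂ : ℝ) (hα₁ : 0 < α₁) (hα₂ : 0 < α₂) (hβ₁ : 0 < β₁) (hβ₂ : 0 < β₂)
    (hd₁ : ∀ s t : ℤ, s ≤ t → ‖X t * P * Xinv s‖ ≤ β₁ * (1 + α₁) ^ (s - t))
    (hd₂ : ∀ s t : ℤ, t ≤ s → ‖X t * (1 - P) * Xinv s‖ ≤ β₂ * (1 + α₂) ^ (t - s))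
    (θ : ℕ → ℤ) (Abar : ℤ → 𝕏 →L[ℝ] 𝕏)
    (hAfwd : ∀ t : ℤ, Tendsto (fun k => A (t + θ k)) atTop (𝓝 (Abar t)))
    (hAbwd : ∀ t : ℤ, Tendsto (fun k => Abar (t - θ k)) atTop (𝓝 (A t)))
    (Xbar Xbarinv : ℤ → 𝕏 →L[ℝ] 𝕏)
    (hXbar : ∀ t : ℤ, Xbar (t + 1) = Abar t * Xbar t) (hXbar0 : Xbar t₀ = 1)
    (hXbarinv : ∀ t : ℤ, Xbar t * Xbarinv t = 1)
    (hXbarinv' : ∀ t : ℤ, Xbarinv t * Xbar t = 1) :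
    ∃ Pbar : 𝕏 →L[ℝ] 𝕏, Pbar * Pbar = Pbar ∧
      (∀ t s : ℤ, s ≤ t →
        Tendsto (fun k => X (t + θ k) * P * Xinv (s + θ k)) atTop
          (𝓝 (Xbar t * Pbar * Xbarinv s))) ∧
      (∀ t s : ℤ, t ≤ s →
        Tendsto (fun k => X (t + θ k) * (1 - P) * Xinv (s + θ k)) atTop
          (𝓝 (Xbar t * (1 - Pbar) * Xbarinv s))) ∧
      (∀ s t : ℤ, s ≤ t → ‖Xbar t * Pbar * Xbarinv s‖ ≤ β₁ * (1 + α₁) ^ (s - t)) ∧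
      (∀ s t : ℤ, t ≤ s → ‖Xbar t * (1 - Pbar) * Xbarinv s‖ ≤ β₂ * (1 + α₂) ^ (t - s)) ∧
      (∀ t s : ℤ, s ≤ t →
        Tendsto (fun k => Xbar (t - θ k) * Pbar * Xbarinv (s - θ k)) atTop
          (𝓝 (X t * P * Xinv s))) ∧
      (∀ t s : ℤ, t ≤ s →
        Tendsto (fun k => Xbar (t - θ k) * (1 - Pbar) * Xbarinv (s - θ k)) atTop
          (𝓝 (X t * (1 - P) * Xinv s))) := by
  obtain ⟨Q, hQ, hlim⟩ := stmt_7_general (X := fun t => ⟨X t, Xinv t, hXinv t, hXinv' t⟩)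
    (Y := fun t => ⟨Xbar t, Xbarinv t, hXbarinv t, hXbarinv' t⟩) hX hXbar ⟨hP, hd₁, hd₂⟩
    (tendsto_mul_zpow_mul_mul_zpow_atBot (by nlinarith) β₁ β₂) hAfwd hAbwd
  exact ⟨Q, hQ.1, fun t s _ => (hlim t s).1, fun t s _ => (hlim t s).2.1, hQ.2, hQ.3,
    fun t s _ => (hlim t s).2.2.1, fun t s _ => (hlim t s).2.2.2⟩
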